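/- Let ξ be an irrational number and y₁, y₂ positive reals such that y = y₁/y₂ is irrational with irrationality measure ω(y) = 1. Then for every μ < 1/3 there exist infinitely many γ = [[v₁,u₁],[v₂,u₂]] ∈ SL(2,ℤ) with v₁ > 0, v₂ > 0, 0 < v₁ξ + u₁ − y₁ ≤ |γ|^{−μ}, and 0 < v₂ξ + u₂ − y₂ ≤ |γ|^{−μ}. -/

import Mathlib

open Matrix MeasureTheory

/-- Denominator `q k` of the `k`-th convergent of the continued fraction of `ξ`. -/
noncomputable def qden (ξ : ℝ) (k : ℕ) : ℝ := (GenContFract.of ξ).dens k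

/-- Numerator `p k` of the `k`-th convergent of the continued fraction of `ξ`. -/
noncomputable def pnum (ξ : ℝ) (k : ℕ) : ℝ := (GenContFract.of ξ).nums k

/-- Action of an integer matrix on `ℝ²` by left multiplication. -/
noncomputable def act (g : Matrix (Fin 2) (Fin 2) ℤ) (x : Fin 2 → ℝ) : Fin 2 → ℝ :=
  (g.map (Int.cast : ℤ → ℝ)).mulVec x

/-- Sup norm of an integer `2 × 2` matrix. -/
noncomputable def mnorm (g : Matrix (Fin 2) (Fin 2) ℤ) : ℝ :=
  max (max |(g 0 0 : ℝ)| |(g 0 1 : ℝ)|) (max |(g 1 0 : ℝ)| |(g 1 1 : ℝ)|)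

/-- Sup norm on `ℝ²`. -/
noncomputable def vnorm (v : Fin 2 → ℝ) : ℝ := max |v 0| |v 1|

/-- The set of exponents `w` such that `|v α + u| ≤ |v| ^ (-w)` has infinitely many
integer solutions `(v, u)`; its supremum is the irrationality measure `ω(α)`. -/
def omegaSet (α : ℝ) : Set ℝ :=
  {w : ℝ | {p : ℤ × ℤ | |(p.1 : ℝ) * α + (p.2 : ℝ)| ≤ |(p.1 : ℝ)| ^ (-w)}.Infinite}

/-- The set of exponents `μ` such that `|γ x - y| ≤ |γ| ^ (-μ)` for infinitely many
`γ ∈ SL(2, ℤ)`; its supremum is `μ(x, y)`. -/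
def muSet (x y : Fin 2 → ℝ) : Set ℝ :=
  {μ : ℝ | {γ : Matrix (Fin 2) (Fin 2) ℤ |
    γ.det = 1 ∧ vnorm (act γ x - y) ≤ mnorm γ ^ (-μ)}.Infinite}

/-- The set of exponents `μ` such that for all sufficiently large `T` there is
`γ ∈ SL(2, ℤ)` with `|γ| ≤ T` and `|γ x - y| ≤ T ^ (-μ)`; its supremum is `μ̂(x, y)`. -/
def muHatSet (x y : Fin 2 → ℝ) : Set ℝ :=
  {μ : ℝ | ∃ T₀ : ℝ, ∀ T : ℝ, T₀ ≤ T → ∃ γ : Matrix (Fin 2) (Fin 2) ℤ,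
    γ.det = 1 ∧ mnorm γ ≤ T ∧ vnorm (act γ x - y) ≤ T ^ (-μ)}

/-!
Factor `γ = M * G`. The columns of `M` come from Farey neighbours `t' / s' < y < t / s` of
`y = y₁ / y₂`, so that `M` sends `(y₂ / s, 0)` to `(y₁, y₂)` up to `y₂ / (s' s)`. The matrix `G`
sends `(ξ, 1)` to a point just above `(y₂ / s, 0)`: its second row is a vector `(q', -p')` with
`q' ξ - p'` of exact order `1 / q`, where `p / q` is a Vahlen approximation of `ξ`, and its first
row is `(q, -p)` plus the right multiple of `(q', -p')`. Then `γ` has size `O(q ^ 2)` and the error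
is `O(1 / (s' s) + max s s' / q)`. If `|v y + u|` is at least of order `v ^ (-w)`, Farey neighbours
of order `X` have `s' s` at least of order `X ^ (1 + 1 / w)`, and `X = q ^ (w / (2 w + 1))` balances
the two terms: the exponent in terms of `|γ|` is `(w + 1) / (4 w + 2)`, which is `1 / 3` at
`w = 1`.
-/

open Set Topology

/-- The fractions `a / b < x < c / d` with positive denominators are neighbours in some Farey
series; the unimodularity relation is used in place of membership in the series. -/
structure FareyBracket (x : ℝ) (a b c d : ℤ) : Prop where
  left_den_pos : 0 < b
  right_den_pos : 0 < d
  det_eq_one : b * c - a * d = 1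
  left_lt : (a : ℝ) < b * x
  lt_right : d * x < c

namespace FareyBracket

variable {x : ℝ} {a b c d : ℤ}

theorem neg (h : FareyBracket x a b c d) : FareyBracket (-x) (-c) d (-a) b where
  left_den_pos := h.right_den_pos
  right_den_pos := h.left_den_pos
  det_eq_one := by linear_combination h.det_eq_one
  left_lt := by push_cast; linarith [h.lt_right]
  lt_right := by push_cast; linarith [h.left_lt]

theorem one_le_left_den (h : FareyBracket x a b c d) : (1 : ℝ) ≤ b := by
  exact_mod_cast h.left_den_pos

theorem one_le_right_den (h : FareyBracket x a b c d) : (1 : ℝ) ≤ d := by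
  exact_mod_cast h.right_den_pos

theorem sub_mul_add_sub_mul_eq_one (h : FareyBracket x a b c d) :
    (b * x - a) * d + (c - d * x) * b = 1 := by
  have hdet : (b * c - a * d : ℝ) = 1 := by exact_mod_cast h.det_eq_one
  linear_combination hdet

theorem left_sub_mul_lt_one (h : FareyBracket x a b c d) : (b * x - a) * d < 1 := by
  have : 0 < (c - d * x) * b :=
    mul_pos (sub_pos.2 h.lt_right) (by linarith [h.one_le_left_den])
  linarith [h.sub_mul_add_sub_mul_eq_one]

theorem right_sub_mul_lt_one (h : FareyBracket x a b c d) : (c - d * x) * b < 1 := by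
  have := h.neg.left_sub_mul_lt_one
  push_cast at this
  linarith

theorem left_num_nonneg (h : FareyBracket x a b c d) (hx : 0 < x) : 0 ≤ a := by
  have hle : b * x - a ≤ (b * x - a) * d :=
    le_mul_of_one_le_right (sub_pos.2 h.left_lt).le h.one_le_right_den
  have hbx : 0 < b * x := mul_pos (by linarith [h.one_le_left_den]) hx
  have : ((-1 : ℤ) : ℝ) < a := by push_cast; linarith [h.left_sub_mul_lt_one]
  exact Int.lt_iff_add_one_le.1 (Int.cast_lt.1 this)

theorem right_num_le (h : FareyBracket x a b c d) : (c : ℝ) ≤ (x + 1) * d := by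
  have hle : c - d * x ≤ (c - d * x) * b :=
    le_mul_of_one_le_right (sub_pos.2 h.lt_right).le h.one_le_left_den
  linarith [h.right_sub_mul_lt_one, h.one_le_right_den]

theorem add_den_sub_one_le_mul_den (h : FareyBracket x a b c d) : (b + d - 1 : ℝ) ≤ b * d := by
  nlinarith [h.one_le_left_den, h.one_le_right_den]

theorem mul_left_le_half_or_mul_right_le_half (h : FareyBracket x a b c d) :
    b * (b * x - a) ≤ 1 / 2 ∨ d * (c - d * x) ≤ 1 / 2 := by
  by_contra! hlt
  have hprod : 1 / 4 < (b * (b * x - a)) * (d * (c - d * x)) := by nlinarith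
  have hamgm := four_mul_le_sq_add ((b * x - a) * d) ((c - d * x) * b)
  rw [h.sub_mul_add_sub_mul_eq_one] at hamgm
  linarith

theorem isCoprime_left (h : FareyBracket x a b c d) : IsCoprime a b :=
  ⟨-d, c, by linear_combination h.det_eq_one⟩

theorem isCoprime_right (h : FareyBracket x a b c d) : IsCoprime c d :=
  ⟨b, -a, by linear_combination h.det_eq_one⟩

theorem lt_left_den (h : FareyBracket x a b c d) {N : ℕ} {ε : ℝ}
    (hε : ∀ k ≤ N, ∀ m : ℤ, ε ≤ dist x (m / k)) (hbd : 1 ≤ ε * (b * d)) : (N : ℤ) < b := by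
  by_contra! hbN
  have hb : (0 : ℝ) < b := by linarith [h.one_le_left_den]
  have hd : (0 : ℝ) < d := by linarith [h.one_le_right_den]
  have hcast : ((b.toNat : ℕ) : ℝ) = b := by
    exact_mod_cast Int.toNat_of_nonneg h.left_den_pos.le
  have hdist : ε ≤ x - a / b := by
    have := hε b.toNat (by omega) a
    rwa [hcast, Real.dist_eq, abs_of_pos] at this
    rw [sub_pos, div_lt_iff₀ hb, mul_comm]
    exact h.left_lt
  have : ε * (b * d) ≤ (b * x - a) * d :=
    calc ε * (b * d) ≤ (x - a / b) * (b * d) := by gcongr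
      _ = (b * x - a) * d := by field_simp
  linarith [h.left_sub_mul_lt_one]

section Diophantine

variable {k w : ℝ}

theorem mul_right_den_le_left_den_rpow (h : FareyBracket x a b c d)
    (hlow : ∀ v u : ℤ, 0 < v → k * (v : ℝ) ^ (-w) ≤ |v * x + u|) : k * d ≤ (b : ℝ) ^ w := by
  have hb : (0 : ℝ) < b := by linarith [h.one_le_left_den]
  have hd : (0 : ℝ) < d := by linarith [h.one_le_right_den]
  have hkb : k ≤ (b * x - a) * (b : ℝ) ^ w := by
    have := hlow b (-a) h.left_den_pos
    rwa [Int.cast_neg, ← sub_eq_add_neg, abs_of_pos (sub_pos.2 h.left_lt), Real.rpow_neg hb.le,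
      ← div_eq_mul_inv, div_le_iff₀ (by positivity)] at this
  calc k * d ≤ ((b * x - a) * (b : ℝ) ^ w) * d := by gcongr
    _ = ((b * x - a) * d) * (b : ℝ) ^ w := by ring
    _ ≤ (b : ℝ) ^ w := mul_le_of_le_one_left (by positivity) h.left_sub_mul_lt_one.le

theorem rpow_mul_right_den_rpow_le (h : FareyBracket x a b c d) (hk : 0 ≤ k) (hw : 0 < w)
    (hlow : ∀ v u : ℤ, 0 < v → k * (v : ℝ) ^ (-w) ≤ |v * x + u|) :
    k ^ w⁻¹ * (d : ℝ) ^ (1 + w⁻¹) ≤ b * d := by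
  have hb : (0 : ℝ) < b := by linarith [h.one_le_left_den]
  have hd : (0 : ℝ) < d := by linarith [h.one_le_right_den]
  calc k ^ w⁻¹ * (d : ℝ) ^ (1 + w⁻¹) = (k * d) ^ w⁻¹ * d := by
        rw [Real.rpow_add hd, Real.rpow_one, Real.mul_rpow hk hd.le]; ring
    _ ≤ ((b : ℝ) ^ w) ^ w⁻¹ * d := by
        gcongr
        exact h.mul_right_den_le_left_den_rpow hlow
    _ = b * d := by rw [Real.rpow_rpow_inv hb.le hw.ne']

theorem rpow_mul_half_rpow_le (h : FareyBracket x a b c d) (hk : 0 ≤ k) (hw : 0 < w)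
    (hlow : ∀ v u : ℤ, 0 < v → k * (v : ℝ) ^ (-w) ≤ |v * x + u|) {X : ℝ} (hX : 0 ≤ X)
    (hsum : X ≤ b + d) : k ^ w⁻¹ * (X / 2) ^ (1 + w⁻¹) ≤ b * d := by
  have hlow_neg : ∀ v u : ℤ, 0 < v → k * (v : ℝ) ^ (-w) ≤ |v * -x + u| := fun v u hv => by
    have := hlow v (-u) hv
    rwa [← abs_neg, Int.cast_neg, neg_add, neg_neg, ← mul_neg] at this
  rcases le_total b d with hbd | hdb
  · have hXd : X / 2 ≤ d := by linarith [Int.cast_le (R := ℝ).2 hbd]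
    refine le_trans ?_ (h.rpow_mul_right_den_rpow_le hk hw hlow)
    gcongr
  · have hXb : X / 2 ≤ b := by linarith [Int.cast_le (R := ℝ).2 hdb]
    rw [mul_comm (b : ℝ)]
    refine le_trans ?_ (h.neg.rpow_mul_right_den_rpow_le hk hw hlow_neg)
    gcongr

end Diophantine

end FareyBracket

section Irrational

variable {x : ℝ}

theorem exists_fareyBracket_nat (hx : Irrational x) {n : ℕ} (hn : 1 ≤ n) :
    ∃ a b c d : ℤ, FareyBracket x a b c d ∧ b ≤ n ∧ d ≤ n ∧ (n : ℤ) < b + d := by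
  induction n, hn using Nat.le_induction with
  | base =>
    refine ⟨⌊x⌋, 1, ⌊x⌋ + 1, 1, ⟨one_pos, one_pos, by ring, ?_, ?_⟩, by simp⟩
    · simpa using (Int.floor_le x).lt_of_ne (hx.ne_int _).symm
    · simp
  | succ n hn ih =>
    obtain ⟨a, b, c, d, h, hbn, hdn, hsum⟩ := ih
    have hb := h.left_den_pos
    have hd := h.right_den_pos
    by_cases hlt : (n : ℤ) + 1 < b + d
    · exact ⟨a, b, c, d, h, by omega, by omega, by omega⟩
    have hmediant : ((b + d : ℤ) : ℝ) * x ≠ ((a + c : ℤ) : ℝ) :=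
      (hx.intCast_mul (by omega)).ne_int _
    rcases hmediant.lt_or_gt with hlt' | hgt
    · exact ⟨a, b, a + c, b + d,
        ⟨hb, by omega, by linear_combination h.det_eq_one, h.left_lt, hlt'⟩,
        by omega, by omega, by omega⟩
    · exact ⟨a + c, b + d, c, d,
        ⟨by omega, hd, by linear_combination h.det_eq_one, hgt, h.lt_right⟩,
        by omega, by omega, by omega⟩

theorem exists_fareyBracket (hx : Irrational x) {X : ℝ} (hX : 1 ≤ X) :
    ∃ a b c d : ℤ, FareyBracket x a b c d ∧ b ≤ X ∧ d ≤ X ∧ X ≤ b + d := by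
  have hfloor : (⌊X⌋₊ : ℝ) ≤ X := Nat.floor_le (by linarith)
  obtain ⟨a, b, c, d, h, hb, hd, hsum⟩ :=
    exists_fareyBracket_nat hx ((Nat.one_le_floor_iff X).2 hX)
  refine ⟨a, b, c, d, h, le_trans ?_ hfloor, le_trans ?_ hfloor,
    (Nat.lt_floor_add_one X).le.trans ?_⟩ <;> exact_mod_cast ‹_›

theorem exists_fareyBracket_lt_den (hx : Irrational x) (N : ℕ) :
    ∃ a b c d : ℤ, FareyBracket x a b c d ∧ (N : ℤ) < b ∧ (N : ℤ) < d := by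
  have hdist : ∀ᶠ ε in 𝓝[>] (0 : ℝ), ∀ k ≤ N, ∀ m : ℤ, ε ≤ dist x (m / k) :=
    (hx.eventually_forall_le_dist_cast_div_of_denom_le N).filter_mono nhdsWithin_le_nhds
  have hpos : ∀ᶠ ε in 𝓝[>] (0 : ℝ), 0 < ε := self_mem_nhdsWithin
  obtain ⟨ε, hε, hε0⟩ := (hdist.and hpos).exists
  obtain ⟨a, b, c, d, h, -, -, hsum⟩ :=
    exists_fareyBracket hx (le_add_of_nonneg_right (inv_nonneg.2 hε0.le) : 1 ≤ 1 + ε⁻¹)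
  have hbd : 1 ≤ ε * (b * d) := by
    rw [← inv_le_iff_one_le_mul₀' hε0]
    linarith [h.add_den_sub_one_le_mul_den]
  have hε_neg : ∀ k ≤ N, ∀ m : ℤ, ε ≤ dist (-x) (m / k) := fun k hk m => by
    have := hε k hk (-m)
    rwa [← dist_neg_neg, Int.cast_neg, neg_div, neg_neg] at this
  exact ⟨a, b, c, d, h, h.lt_left_den hε hbd, h.neg.lt_left_den hε_neg (by rwa [mul_comm (d : ℝ)])⟩

/-- Vahlen's theorem. -/
theorem exists_isCoprime_mul_abs_le_half (hx : Irrational x) (N : ℕ) :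
    ∃ p q : ℤ, (N : ℤ) < q ∧ IsCoprime p q ∧ q * |q * x - p| ≤ 1 / 2 := by
  obtain ⟨a, b, c, d, h, hNb, hNd⟩ := exists_fareyBracket_lt_den hx N
  rcases h.mul_left_le_half_or_mul_right_le_half with hle | hle
  · refine ⟨a, b, hNb, h.isCoprime_left, ?_⟩
    rwa [abs_of_pos (sub_pos.2 h.left_lt)]
  · refine ⟨c, d, hNd, h.isCoprime_right, ?_⟩
    rwa [abs_sub_comm, abs_of_pos (sub_pos.2 h.lt_right)]

theorem exists_pos_mul_rpow_le_abs (hx : Irrational x) {w : ℝ} (hw : w ∉ omegaSet x) :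
    ∃ k : ℝ, 0 < k ∧ ∀ v u : ℤ, 0 < v → k * (v : ℝ) ^ (-w) ≤ |v * x + u| := by
  have hfin := not_infinite.1 hw
  have hsmall : ∀ p : ℤ × ℤ, 0 < p.1 →
      ∀ᶠ k in 𝓝[>] (0 : ℝ), k * (p.1 : ℝ) ^ (-w) ≤ |p.1 * x + p.2| := by
    intro p hp
    have hne : p.1 * x + p.2 ≠ 0 := ((hx.intCast_mul hp.ne').add_intCast _).ne_zero
    have hp' : 0 < (p.1 : ℝ) ^ (-w) := Real.rpow_pos_of_pos (by exact_mod_cast hp) _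
    filter_upwards [Ioo_mem_nhdsGT (div_pos (abs_pos.2 hne) hp')] with k hk
    exact ((lt_div_iff₀ hp').1 hk.2).le
  have hexceptions := (Filter.eventually_all_finite hfin).2 fun p _ =>
    Filter.eventually_imp_distrib_left.2 (hsmall p)
  have hunit : ∀ᶠ k in 𝓝[>] (0 : ℝ), k ∈ Ioo 0 1 := Ioo_mem_nhdsGT one_pos
  obtain ⟨k, hk, hk0, hk1⟩ := (hexceptions.and hunit).exists
  refine ⟨k, hk0, fun v u hv => ?_⟩
  by_cases hmem : |v * x + u| ≤ |(v : ℝ)| ^ (-w)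
  · exact hk (v, u) hmem hv
  · have hv' : (0 : ℝ) < v := by exact_mod_cast hv
    rw [abs_of_pos hv', not_le] at hmem
    exact (mul_le_of_le_one_left (by positivity) hk1.le).trans hmem.le

end Irrational

section Matrix

variable (g h : Matrix (Fin 2) (Fin 2) ℤ)

theorem act_apply (x : Fin 2 → ℝ) (i : Fin 2) : act g x i = g i 0 * x 0 + g i 1 * x 1 := by
  simp [act, mulVec, dotProduct, Fin.sum_univ_two]

theorem act_mul (x : Fin 2 → ℝ) : act (g * h) x = act g (act h x) := by
  simp only [act, mulVec_mulVec]
  congr 1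
  ext i j
  simp [Matrix.mul_apply]

theorem abs_apply_le_mnorm (i j : Fin 2) : |(g i j : ℝ)| ≤ mnorm g := by
  fin_cases i <;> fin_cases j <;> simp [mnorm]

variable {g}

theorem mnorm_le_of_abs_act_le {ξ B : ℝ} (hcol : ∀ i, |(g i 0 : ℝ)| ≤ B)
    (hact : ∀ i, |act g ![ξ, 1] i| ≤ B) : mnorm g ≤ (1 + |ξ|) * B := by
  have hB : 0 ≤ B := (abs_nonneg _).trans (hcol 0)
  have hleft : ∀ i, |(g i 0 : ℝ)| ≤ (1 + |ξ|) * B := fun i =>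
    (hcol i).trans (le_mul_of_one_le_left hB (by linarith [abs_nonneg ξ]))
  have hright : ∀ i, |(g i 1 : ℝ)| ≤ (1 + |ξ|) * B := fun i =>
    calc |(g i 1 : ℝ)| = |act g ![ξ, 1] i - ξ * g i 0| := by
          rw [act_apply]; simp [mul_comm]
      _ ≤ |act g ![ξ, 1] i| + |ξ * g i 0| := abs_sub _ _
      _ ≤ B + |ξ| * B := by
          rw [abs_mul]
          gcongr
          exacts [hact i, hcol i]
      _ = (1 + |ξ|) * B := by ring
  exact max_le (max_le (hleft 0) (hright 0)) (max_le (hleft 1) (hright 1))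

end Matrix

theorem exists_mul_sub_mul_eq_one_of_isCoprime {p q : ℤ} (hpq : IsCoprime p q) (hq : 0 < q) :
    ∃ p' q' : ℤ, 0 < q' ∧ q' ≤ q ∧ q' * p - p' * q = 1 := by
  obtain ⟨u, v, huv⟩ := hpq
  obtain ⟨m, ⟨hpos, hle⟩, -⟩ := existsUnique_add_zsmul_mem_Ioc hq u 0
  rw [smul_eq_mul] at hpos hle
  exact ⟨m * p - v, u + m * q, hpos, by simpa using hle, by linear_combination huv⟩

/-- `G ∈ SL(2, ℤ)` sends `(ξ, 1)` to a point just above `(z, 0)` in both coordinates, with an error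
`O(1 / q)` and a first column `(O(q ^ 2 z + q), O(q))`. -/
structure AxisApprox (ξ : ℝ) (q : ℤ) (z : ℝ) (G : Matrix (Fin 2) (Fin 2) ℤ) : Prop where
  det_eq_one : G.det = 1
  le_zero_zero : q ≤ G 0 0
  zero_zero_le : (G 0 0 : ℝ) ≤ 2 * q ^ 2 * z + 3 * q
  one_zero_pos : 0 < G 1 0
  one_zero_le : G 1 0 ≤ q
  act_zero_sub_mem : act G ![ξ, 1] 0 - z ∈ Ioc 0 (2 / (q : ℝ))
  act_one_mem : act G ![ξ, 1] 1 ∈ Ioc 0 (2 / (q : ℝ))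

theorem sub_mul_mem_Icc_of_mul_abs_le_half {ξ : ℝ} {p q p' q' : ℤ} (hq' : 0 < q') (hle : q' ≤ q)
    (hdet : q' * p - p' * q = 1) (hp : q * |q * ξ - p| ≤ 1 / 2) :
    (q' * ξ - p') * q ∈ Icc (1 / 2 : ℝ) (3 / 2) := by
  have hdetR : (q' * p - p' * q : ℝ) = 1 := by exact_mod_cast hdet
  have hid : (q' * ξ - p') * q = 1 + q' * (q * ξ - p) := by linear_combination hdetR
  have hsmall : |q' * (q * ξ - p)| ≤ 1 / 2 := by
    rw [abs_mul, abs_of_pos (by exact_mod_cast hq')]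
    refine le_trans ?_ hp
    gcongr
  rw [hid, mem_Icc]
  constructor <;> linarith [(abs_le.1 hsmall).1, (abs_le.1 hsmall).2]

theorem exists_nonneg_add_mul_sub_mem_Ioc {φ e z : ℝ} (he : 0 < e) (hφ : φ ≤ e) (hz : 0 ≤ z) :
    ∃ l : ℤ, 0 ≤ l ∧ φ + l * e - z ∈ Ioc 0 e := by
  obtain ⟨l, ⟨hlt, hle⟩, -⟩ := existsUnique_add_zsmul_mem_Ioc he φ z
  rw [zsmul_eq_mul] at hlt hle
  have hl : 0 < ((l + 1 : ℤ) : ℝ) := by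
    refine pos_of_mul_pos_left ?_ he.le
    push_cast
    linarith
  exact ⟨l, Int.lt_add_one_iff.1 (Int.cast_pos.1 hl), by linarith, by linarith⟩

theorem le_of_add_mul_sub_le {φ e l q z : ℝ} (hz : 0 ≤ z) (hφ : |φ| ≤ e) (hl : φ + l * e - z ≤ e)
    (hq : 1 ≤ 2 * (e * q)) (he : 0 < e) : l ≤ 2 * q * z + 2 := by
  refine le_of_mul_le_mul_right ?_ he
  have : 0 ≤ z * (2 * (e * q) - 1) := mul_nonneg hz (by linarith)
  linarith [neg_abs_le φ]

theorem exists_axisApprox {ξ z : ℝ} {p q : ℤ} (hq : 0 < q) (hpq : IsCoprime p q)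
    (hp : q * |q * ξ - p| ≤ 1 / 2) (hz : 0 ≤ z) : ∃ G, AxisApprox ξ q z G := by
  obtain ⟨p', q', hq', hle, hdet⟩ := exists_mul_sub_mul_eq_one_of_isCoprime hpq hq
  obtain ⟨hstep_ge, hstep_le⟩ := sub_mul_mem_Icc_of_mul_abs_le_half hq' hle hdet hp
  set e : ℝ := q' * ξ - p' with he
  set φ : ℝ := q * ξ - p with hφ
  have hqR : (0 : ℝ) < q := by exact_mod_cast hq
  have hleR : (q' : ℝ) ≤ q := by exact_mod_cast hle
  have he0 : 0 < e := pos_of_mul_pos_left (by linarith) hqR.le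
  have heq : e ≤ 2 / q := by rw [le_div_iff₀ hqR]; linarith
  have hφe : |φ| ≤ e := le_of_mul_le_mul_left (by linarith) hqR
  obtain ⟨l, hl0, hlpos, hlle⟩ :=
    exists_nonneg_add_mul_sub_mem_Ioc he0 ((le_abs_self φ).trans hφe) hz
  have hl : (l : ℝ) ≤ 2 * q * z + 2 := le_of_add_mul_sub_le hz hφe hlle (by linarith) he0
  refine ⟨!![q + l * q', -(p + l * p'); q', -p'], ?_, ?_, ?_, hq', hle, ?_, ?_⟩
  · rw [det_fin_two_of]
    linear_combination hdet
  · simpa using mul_nonneg hl0 hq'.le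
  · calc (((q + l * q' : ℤ)) : ℝ) = q + l * q' := by push_cast; rfl
      _ ≤ q + (2 * q * z + 2) * q := by gcongr
      _ = 2 * q ^ 2 * z + 3 * q := by ring
  · have hact : act !![q + l * q', -(p + l * p'); q', -p'] ![ξ, 1] 0 = φ + l * e := by
      simp [act_apply, he, hφ]
      ring
    rw [hact]
    exact ⟨hlpos, hlle.trans heq⟩
  · have hact : act !![q + l * q', -(p + l * p'); q', -p'] ![ξ, 1] 1 = e := by
      simp [act_apply, he]
      ring
    rw [hact]
    exact ⟨he0, heq⟩

/-- `γ ∈ SL(2, ℤ)` has a positive first column and sends `(ξ, 1)` into the box of side `ε` above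
`y`, open below because the approximation has to be strict. -/
structure ApproxAbove (ξ : ℝ) (y : Fin 2 → ℝ) (ε : ℝ) (γ : Matrix (Fin 2) (Fin 2) ℤ) : Prop where
  det_eq_one : γ.det = 1
  col_pos : ∀ i, 0 < γ i 0
  act_sub_mem : ∀ i, act γ ![ξ, 1] i - y i ∈ Ioc 0 ε

theorem ApproxAbove.mono {ξ ε ε' : ℝ} {y : Fin 2 → ℝ} {γ : Matrix (Fin 2) (Fin 2) ℤ}
    (h : ApproxAbove ξ y ε γ) (hε : ε ≤ ε') : ApproxAbove ξ y ε' γ where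
  det_eq_one := h.det_eq_one
  col_pos := h.col_pos
  act_sub_mem i := Ioc_subset_Ioc_right hε (h.act_sub_mem i)

theorem ApproxAbove.mnorm_le {ξ ε B : ℝ} {y : Fin 2 → ℝ} {γ : Matrix (Fin 2) (Fin 2) ℤ}
    (h : ApproxAbove ξ y ε γ) (hy : ∀ i, 0 ≤ y i) (hcol : ∀ i, (γ i 0 : ℝ) ≤ B)
    (hB : ∀ i, y i + ε ≤ B) : mnorm γ ≤ (1 + |ξ|) * B := by
  refine mnorm_le_of_abs_act_le (fun i => ?_) fun i => ?_
  · rw [abs_of_pos (by exact_mod_cast h.col_pos i)]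
    exact hcol i
  · obtain ⟨hpos, hle⟩ := h.act_sub_mem i
    rw [abs_of_nonneg (by linarith [hy i])]
    linarith [hB i]

namespace FareyBracket

variable {y Y X ξ : ℝ} {t' s' t s q : ℤ} {G : Matrix (Fin 2) (Fin 2) ℤ}

theorem act_zero_sub_mem_Ioc (h : FareyBracket y t' s' t s) (hy : 0 < y) (hY : 0 < Y)
    {z : Fin 2 → ℝ} {ε : ℝ} (hz₀ : z 0 - Y / s ∈ Ioc 0 ε) (hz₁ : z 1 ∈ Ioc 0 ε) :
    act !![t, t'; s, s'] z 0 - y * Y ∈ Ioc 0 (Y / (s' * s) + (y + 1) * ((s + s') * ε)) := by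
  obtain ⟨hδ0, hδε⟩ := hz₀
  obtain ⟨he0, heε⟩ := hz₁
  have hs : (0 : ℝ) < s := by linarith [h.one_le_right_den]
  have hs' : (0 : ℝ) < s' := by linarith [h.one_le_left_den]
  have ht' : (0 : ℝ) ≤ t' := by exact_mod_cast h.left_num_nonneg hy
  have ht : (0 : ℝ) < t := (mul_pos hs hy).trans h.lt_right
  have hgap : 0 < t - s * y := sub_pos.2 h.lt_right
  have hact : act !![t, t'; s, s'] z 0 - y * Y
      = (t - s * y) * (Y / s) + (t * (z 0 - Y / s) + t' * z 1) := by
    simp only [act_apply, of_apply, cons_val', cons_val_zero, cons_val_one, cons_val_fin_one]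
    field_simp
    ring
  have hfarey : (t - s * y) * (Y / s) ≤ Y / (s' * s) :=
    calc (t - s * y) * (Y / s) = ((t - s * y) * s') * (Y / (s' * s)) := by field_simp
      _ ≤ Y / (s' * s) := mul_le_of_le_one_left (by positivity) h.right_sub_mul_lt_one.le
  have herr : t * (z 0 - Y / s) + t' * z 1 ≤ (y + 1) * ((s + s') * ε) :=
    calc t * (z 0 - Y / s) + t' * z 1 ≤ ((y + 1) * s) * ε + ((y + 1) * s') * ε := by
          gcongr
          exacts [h.right_num_le, by linarith [h.left_lt]]
      _ = (y + 1) * ((s + s') * ε) := by ring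
  rw [hact]
  exact ⟨by positivity, add_le_add hfarey herr⟩

theorem act_one_sub_mem_Ioc (h : FareyBracket y t' s' t s) {z : Fin 2 → ℝ} {ε : ℝ}
    (hz₀ : z 0 - Y / s ∈ Ioc 0 ε) (hz₁ : z 1 ∈ Ioc 0 ε) :
    act !![t, t'; s, s'] z 1 - Y ∈ Ioc 0 ((s + s') * ε) := by
  obtain ⟨hδ0, hδε⟩ := hz₀
  obtain ⟨he0, heε⟩ := hz₁
  have hs : (0 : ℝ) < s := by linarith [h.one_le_right_den]
  have hs' : (0 : ℝ) < s' := by linarith [h.one_le_left_den]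
  have hact : act !![t, t'; s, s'] z 1 - Y = s * (z 0 - Y / s) + s' * z 1 := by
    simp only [act_apply, of_apply, cons_val', cons_val_zero, cons_val_one, cons_val_fin_one]
    field_simp
    ring
  rw [hact, add_mul]
  exact ⟨by positivity, by gcongr⟩

theorem act_sub_mem_Ioc (h : FareyBracket y t' s' t s) (hy : 0 < y) (hY : 0 < Y)
    (hsX : s ≤ X) (hs'X : s' ≤ X) {z : Fin 2 → ℝ} {ε : ℝ} (hz₀ : z 0 - Y / s ∈ Ioc 0 ε)
    (hz₁ : z 1 ∈ Ioc 0 ε) (i : Fin 2) :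
    act !![t, t'; s, s'] z i - ![y * Y, Y] i ∈
      Ioc 0 (Y / (s' * s) + (y + 1) * ((X + X) * ε)) := by
  have hε : 0 ≤ ε := (hz₁.1.trans_le hz₁.2).le
  have hs : (0 : ℝ) < s := by linarith [h.one_le_right_den]
  have hs' : (0 : ℝ) < s' := by linarith [h.one_le_left_den]
  have hsum : (s + s') * ε ≤ (X + X) * ε := by gcongr
  have hXε : 0 ≤ (X + X) * ε := le_trans (by positivity) hsum
  fin_cases i
  · refine Ioc_subset_Ioc_right ?_ (h.act_zero_sub_mem_Ioc hy hY hz₀ hz₁)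
    gcongr
  · refine Ioc_subset_Ioc_right ?_ (h.act_one_sub_mem_Ioc hz₀ hz₁)
    have : 0 ≤ Y / (s' * s) + y * ((X + X) * ε) := by positivity
    linarith

theorem den_mul_add_den_mul_le (h : FareyBracket y t' s' t s) (hsX : s ≤ X) (hs'X : s' ≤ X)
    (hXq : X ≤ q) (hG : AxisApprox ξ q (Y / s) G) :
    (s * G 0 0 + s' * G 1 0 : ℝ) ≤ (2 * Y + 4) * q ^ 2 := by
  have hs : (0 : ℝ) < s := by linarith [h.one_le_right_den]
  have hs' : (0 : ℝ) < s' := by linarith [h.one_le_left_den]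
  have hq : (0 : ℝ) ≤ q := by linarith
  have hsq : s ≤ q := by exact_mod_cast hsX.trans hXq
  have hs'q : s' ≤ q := by exact_mod_cast hs'X.trans hXq
  have hG₁ : (G 1 0 : ℝ) ≤ q := by exact_mod_cast hG.one_zero_le
  calc (s * G 0 0 + s' * G 1 0 : ℝ) ≤ s * (2 * q ^ 2 * (Y / s) + 3 * q) + s' * q := by
        gcongr
        exact hG.zero_zero_le
    _ = 2 * Y * q ^ 2 + 3 * (s * q) + s' * q := by field_simp
    _ ≤ 2 * Y * q ^ 2 + 3 * (q * q) + q * q := by gcongr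
    _ = (2 * Y + 4) * q ^ 2 := by ring

theorem mul_apply_zero_mem_Ioc (h : FareyBracket y t' s' t s) (hy : 0 < y) (hsX : s ≤ X)
    (hs'X : s' ≤ X) (hXq : X ≤ q) (hG : AxisApprox ξ q (Y / s) G) (i : Fin 2) :
    (((!![t, t'; s, s'] * G) i 0 : ℤ) : ℝ) ∈ Ioc 0 ((y + 1) * ((2 * Y + 4) * q ^ 2)) := by
  have hs : (0 : ℝ) < s := by linarith [h.one_le_right_den]
  have hs' : (0 : ℝ) < s' := by linarith [h.one_le_left_den]
  have ht' : (0 : ℝ) ≤ t' := by exact_mod_cast h.left_num_nonneg hy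
  have ht : (0 : ℝ) < t := (mul_pos hs hy).trans h.lt_right
  have hq : (0 : ℝ) < q := by linarith
  have hG₀ : (0 : ℝ) < G 0 0 := hq.trans_le (by exact_mod_cast hG.le_zero_zero)
  have hG₁ : (0 : ℝ) < G 1 0 := by exact_mod_cast hG.one_zero_pos
  have hden := h.den_mul_add_den_mul_le hsX hs'X hXq hG
  fin_cases i
  · have hentry : (((!![t, t'; s, s'] * G) 0 0 : ℤ) : ℝ) = t * G 0 0 + t' * G 1 0 := by
      simp [Matrix.mul_apply]
    change (((!![t, t'; s, s'] * G) 0 0 : ℤ) : ℝ) ∈ _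
    rw [hentry]
    refine ⟨by positivity, ?_⟩
    calc t * G 0 0 + t' * G 1 0 ≤ ((y + 1) * s) * G 0 0 + ((y + 1) * s') * G 1 0 := by
          gcongr
          exacts [h.right_num_le, by linarith [h.left_lt]]
      _ = (y + 1) * (s * G 0 0 + s' * G 1 0) := by ring
      _ ≤ (y + 1) * ((2 * Y + 4) * q ^ 2) := by gcongr
  · have hentry : (((!![t, t'; s, s'] * G) 1 0 : ℤ) : ℝ) = s * G 0 0 + s' * G 1 0 := by
      simp [Matrix.mul_apply]
    change (((!![t, t'; s, s'] * G) 1 0 : ℤ) : ℝ) ∈ _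
    rw [hentry]
    refine ⟨by positivity, hden.trans (le_mul_of_one_le_left ?_ (by linarith))⟩
    exact le_trans (by positivity) hden

theorem le_mul_one_zero (h : FareyBracket y t' s' t s) (hq : 0 ≤ q)
    (hG : AxisApprox ξ q (Y / s) G) : q ≤ (!![t, t'; s, s'] * G) 1 0 := by
  have hentry : (!![t, t'; s, s'] * G) 1 0 = s * G 0 0 + s' * G 1 0 := by
    simp [Matrix.mul_apply]
  have hs : 1 * q ≤ s * G 0 0 :=
    mul_le_mul h.right_den_pos hG.le_zero_zero hq h.right_den_pos.le
  linarith [mul_pos h.left_den_pos hG.one_zero_pos]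

theorem exists_approxAbove {p : ℤ} (h : FareyBracket y t' s' t s) (hy : 0 < y) (hY : 0 < Y)
    (hsX : s ≤ X) (hs'X : s' ≤ X) (hXq : X ≤ q) (hpq : IsCoprime p q)
    (hp : q * |q * ξ - p| ≤ 1 / 2) :
    ∃ γ, ApproxAbove ξ ![y * Y, Y] (Y / (s' * s) + 4 * (y + 1) * (X / q)) γ ∧ q ≤ mnorm γ ∧
      mnorm γ ≤ (1 + |ξ|) * ((y + 1) * (2 * Y + 4)) * q ^ 2 := by
  have hs : (1 : ℝ) ≤ s := h.one_le_right_den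
  have hs' : (1 : ℝ) ≤ s' := h.one_le_left_den
  have hqR : (1 : ℝ) ≤ q := by linarith
  have hq : 0 < q := by exact_mod_cast one_pos.trans_le hqR
  obtain ⟨G, hG⟩ := exists_axisApprox hq hpq hp (by positivity : 0 ≤ Y / s)
  have hcol := h.mul_apply_zero_mem_Ioc hy hsX hs'X hXq hG
  have hγ : ApproxAbove ξ ![y * Y, Y] (Y / (s' * s) + 4 * (y + 1) * (X / q))
      (!![t, t'; s, s'] * G) := by
    refine ⟨?_, fun i => by exact_mod_cast (hcol i).1, fun i => ?_⟩
    · rw [det_mul, hG.det_eq_one, det_fin_two_of]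
      linear_combination h.det_eq_one
    · have := h.act_sub_mem_Ioc hy hY hsX hs'X hG.act_zero_sub_mem hG.act_one_mem i
      rw [act_mul]
      convert this using 3
      ring
  have herr : Y / (s' * s) + 4 * (y + 1) * (X / q) ≤ Y + 4 * (y + 1) :=
    add_le_add (div_le_self hY.le (one_le_mul_of_one_le_of_one_le hs' hs))
      (mul_le_of_le_one_right (by positivity) (div_le_one_of_le₀ hXq (by linarith)))
  refine ⟨_, hγ, ?_, ?_⟩
  · have hle : (q : ℝ) ≤ ((!![t, t'; s, s'] * G) 1 0 : ℤ) := by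
      exact_mod_cast h.le_mul_one_zero hq.le hG
    exact hle.trans ((le_abs_self _).trans (abs_apply_le_mnorm _ 1 0))
  · rw [mul_assoc, mul_assoc (y + 1)]
    have hyY : 0 < y * Y := mul_pos hy hY
    have htarget : ∀ i, 0 ≤ ![y * Y, Y] i ∧ ![y * Y, Y] i ≤ (y + 1) * Y :=
      Fin.forall_fin_two.2 ⟨⟨hyY.le, by simp; linarith⟩, hY.le, by simp; linarith⟩
    refine hγ.mnorm_le (fun i => (htarget i).1) (fun i => (hcol i).2) fun i => ?_
    calc ![y * Y, Y] i + (Y / (s' * s) + 4 * (y + 1) * (X / q))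
        ≤ (y + 1) * Y + (Y + 4 * (y + 1)) := add_le_add (htarget i).2 herr
      _ ≤ (y + 1) * ((2 * Y + 4) * 1) := by linarith
      _ ≤ (y + 1) * ((2 * Y + 4) * q ^ 2) := by
          gcongr
          exact one_le_pow₀ hqR

end FareyBracket

theorem rpow_neg_two_mul_le_of_le_mul_sq {K m q τ : ℝ} (hK : 0 < K) (hq : 0 < q) (hm : 0 < m)
    (hτ : 0 ≤ τ) (hle : m ≤ K * q ^ 2) : q ^ (-(2 * τ)) ≤ K ^ τ * m ^ (-τ) :=
  calc q ^ (-(2 * τ)) = (q ^ 2) ^ (-τ) := by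
        rw [← Real.rpow_natCast, ← Real.rpow_mul hq.le]
        push_cast
        ring_nf
    _ ≤ (m / K) ^ (-τ) :=
        Real.rpow_le_rpow_of_nonpos (by positivity) ((div_le_iff₀' hK).2 hle) (by linarith)
    _ = K ^ τ * m ^ (-τ) := by
        rw [Real.div_rpow hm.le hK.le, Real.rpow_neg hK.le, div_inv_eq_mul, mul_comm]

section Exponent

variable {ξ y Y w : ℝ}

theorem exists_fareyBracket_balanced (hy : Irrational y) (hw : 0 < w) (hwy : w ∉ omegaSet y) :
    ∃ A : ℝ, 0 < A ∧ ∀ q : ℝ, 1 ≤ q → ∃ t' s' t s : ℤ, FareyBracket y t' s' t s ∧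
      s ≤ q ^ (w / (2 * w + 1)) ∧ s' ≤ q ^ (w / (2 * w + 1)) ∧
      A * q ^ ((w + 1) / (2 * w + 1)) ≤ s' * s := by
  obtain ⟨k, hk, hlow⟩ := exists_pos_mul_rpow_le_abs hy hwy
  refine ⟨k ^ w⁻¹ / 2 ^ (1 + w⁻¹), by positivity, fun q hq => ?_⟩
  have hX : 1 ≤ q ^ (w / (2 * w + 1)) := Real.one_le_rpow hq (by positivity)
  obtain ⟨t', s', t, s, h, hs', hs, hsum⟩ := exists_fareyBracket hy hX
  refine ⟨t', s', t, s, h, hs, hs', ?_⟩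
  have hexp : w / (2 * w + 1) * (1 + w⁻¹) = (w + 1) / (2 * w + 1) := by field_simp
  calc k ^ w⁻¹ / 2 ^ (1 + w⁻¹) * q ^ ((w + 1) / (2 * w + 1))
      = k ^ w⁻¹ * (q ^ (w / (2 * w + 1)) / 2) ^ (1 + w⁻¹) := by
        rw [Real.div_rpow (by positivity) two_pos.le, ← Real.rpow_mul (by linarith), hexp]
        ring
    _ ≤ s' * s := h.rpow_mul_half_rpow_le hk.le hw hlow (by linarith) hsum

theorem exists_approxAbove_mul_rpow (hξ : Irrational ξ) (hy₀ : 0 < y) (hY : 0 < Y)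
    (hy : Irrational y) (hw : 0 < w) (hwy : w ∉ omegaSet y) :
    ∃ C : ℝ, 0 < C ∧ ∀ N : ℕ, ∃ q : ℤ, (N : ℤ) < q ∧ ∃ γ,
      ApproxAbove ξ ![y * Y, Y] (C * (q : ℝ) ^ (-((w + 1) / (2 * w + 1)))) γ ∧
      q ≤ mnorm γ ∧ mnorm γ ≤ (1 + |ξ|) * ((y + 1) * (2 * Y + 4)) * q ^ 2 := by
  obtain ⟨A, hA, hfarey⟩ := exists_fareyBracket_balanced hy hw hwy
  refine ⟨Y / A + 4 * (y + 1), by positivity, fun N => ?_⟩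
  obtain ⟨p, q, hNq, hpq, hp⟩ := exists_isCoprime_mul_abs_le_half hξ N
  have hq1 : (1 : ℝ) ≤ q := by exact_mod_cast (by omega : 1 ≤ q)
  have hq0 : (0 : ℝ) < q := by linarith
  obtain ⟨t', s', t, s, h, hs, hs', hprod⟩ := hfarey q hq1
  have hXq : (q : ℝ) ^ (w / (2 * w + 1)) ≤ q :=
    Real.rpow_le_self_of_one_le hq1 (div_le_one_of_le₀ (by linarith) (by linarith))
  obtain ⟨γ, hγ, hge, hle⟩ := h.exists_approxAbove hy₀ hY hs hs' hXq hpq hp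
  refine ⟨q, hNq, γ, hγ.mono ?_, hge, hle⟩
  have hexp : w / (2 * w + 1) - 1 = -((w + 1) / (2 * w + 1)) := by field_simp; ring
  have hdiv : (q : ℝ) ^ (w / (2 * w + 1)) / q = (q : ℝ) ^ (-((w + 1) / (2 * w + 1))) := by
    rw [← hexp, Real.rpow_sub_one hq0.ne']
  calc Y / (s' * s) + 4 * (y + 1) * ((q : ℝ) ^ (w / (2 * w + 1)) / q)
      ≤ Y / (A * (q : ℝ) ^ ((w + 1) / (2 * w + 1)))
        + 4 * (y + 1) * (q : ℝ) ^ (-((w + 1) / (2 * w + 1))) := by rw [hdiv]; gcongr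
    _ = (Y / A + 4 * (y + 1)) * (q : ℝ) ^ (-((w + 1) / (2 * w + 1))) := by
        rw [Real.rpow_neg hq0.le]
        field_simp

theorem exists_approxAbove_mul_mnorm_rpow (hξ : Irrational ξ) (hy₀ : 0 < y) (hY : 0 < Y)
    (hy : Irrational y) (hw : 0 < w) (hwy : w ∉ omegaSet y) :
    ∃ C : ℝ, ∀ T : ℝ, ∃ γ, T < mnorm γ ∧
      ApproxAbove ξ ![y * Y, Y] (C * mnorm γ ^ (-((w + 1) / (4 * w + 2)))) γ := by
  obtain ⟨C, hC, happrox⟩ := exists_approxAbove_mul_rpow hξ hy₀ hY hy hw hwy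
  set K := (1 + |ξ|) * ((y + 1) * (2 * Y + 4))
  have hK : 0 < K := by positivity
  refine ⟨C * K ^ ((w + 1) / (4 * w + 2)), fun T => ?_⟩
  obtain ⟨N, hN⟩ := exists_nat_ge T
  obtain ⟨q, hNq, γ, hγ, hge, hle⟩ := happrox N
  have hNqR : (N : ℝ) < q := by exact_mod_cast hNq
  have hq : (0 : ℝ) < q := N.cast_nonneg.trans_lt hNqR
  refine ⟨γ, (hN.trans_lt hNqR).trans_le hge, hγ.mono ?_⟩
  have hexp : (w + 1) / (2 * w + 1) = 2 * ((w + 1) / (4 * w + 2)) := by field_simp; ring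
  rw [hexp, mul_assoc]
  gcongr
  exact rpow_neg_two_mul_le_of_le_mul_sq hK hq (hq.trans_le hge) (by positivity) hle

end Exponent

theorem stmt17_general (ξ : ℝ) (hξ : Irrational ξ) (y₁ y₂ : ℝ) (hy₁ : 0 < y₁) (hy₂ : 0 < y₂)
    (hy : Irrational (y₁ / y₂)) (w : ℝ) (hw : 0 < w) (hwy : w ∉ omegaSet (y₁ / y₂))
    (μ : ℝ) (hμ : μ < (w + 1) / (4 * w + 2)) :
    ∀ T : ℝ, ∃ γ : Matrix (Fin 2) (Fin 2) ℤ,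
      γ.det = 1 ∧ T < mnorm γ ∧ 0 < γ 0 0 ∧ 0 < γ 1 0 ∧
        0 < (γ 0 0 : ℝ) * ξ + (γ 0 1 : ℝ) - y₁ ∧
        (γ 0 0 : ℝ) * ξ + (γ 0 1 : ℝ) - y₁ ≤ mnorm γ ^ (-μ) ∧
        0 < (γ 1 0 : ℝ) * ξ + (γ 1 1 : ℝ) - y₂ ∧
        (γ 1 0 : ℝ) * ξ + (γ 1 1 : ℝ) - y₂ ≤ mnorm γ ^ (-μ) := by
  intro T
  obtain ⟨C, happrox⟩ := exists_approxAbove_mul_mnorm_rpow hξ (div_pos hy₁ hy₂) hy₂ hy hw hwy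
  obtain ⟨m₀, hm₀⟩ := Filter.eventually_atTop.1
    ((tendsto_rpow_atTop (sub_pos.2 hμ)).eventually_ge_atTop C)
  obtain ⟨γ, hlarge, hγ⟩ := happrox (max T (max m₀ 0))
  obtain ⟨hT, hm, hpos⟩ := by simpa only [max_lt_iff] using hlarge
  have hC : C * mnorm γ ^ (-((w + 1) / (4 * w + 2))) ≤ mnorm γ ^ (-μ) :=
    calc C * mnorm γ ^ (-((w + 1) / (4 * w + 2)))
        ≤ mnorm γ ^ ((w + 1) / (4 * w + 2) - μ) * mnorm γ ^ (-((w + 1) / (4 * w + 2))) := by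
          gcongr
          exact hm₀ _ hm.le
      _ = mnorm γ ^ (-μ) := by rw [← Real.rpow_add hpos]; ring_nf
  have hmem := (hγ.mono hC).act_sub_mem
  rw [div_mul_cancel₀ _ hy₂.ne', Fin.forall_fin_two] at hmem
  simp only [act_apply, cons_val_zero, cons_val_one, mul_one, mem_Ioc] at hmem
  exact ⟨γ, hγ.det_eq_one, hT, hγ.col_pos 0, hγ.col_pos 1, hmem.1.1, hmem.1.2, hmem.2.1, hmem.2.2⟩

/-- Theorem 5: approximation with signs. For every `0 < μ < 1/3` there are
infinitely many `γ = [[v₁, u₁], [v₂, u₂]] ∈ SL(2, ℤ)` with `v₁ > 0`, `v₂ > 0`,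
`0 < v₁ξ + u₁ - y₁ ≤ |γ|^{-μ}` and `0 < v₂ξ + u₂ - y₂ ≤ |γ|^{-μ}`. -/
theorem stmt17 (ξ : ℝ) (hξ : Irrational ξ) (y₁ y₂ : ℝ) (hy₁ : 0 < y₁) (hy₂ : 0 < y₂)
    (hy : Irrational (y₁ / y₂))
    (hωy : ∀ ε : ℝ, 0 < ε →
      {p : ℤ × ℤ | |(p.1 : ℝ) * (y₁ / y₂) + (p.2 : ℝ)| ≤ |(p.1 : ℝ)| ^ (-(1 + ε))}.Finite)
    (μ : ℝ) (hμ0 : 0 < μ) (hμ : μ < 1 / 3) :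
    ∀ T : ℝ, ∃ γ : Matrix (Fin 2) (Fin 2) ℤ,
      γ.det = 1 ∧ T < mnorm γ ∧ 0 < γ 0 0 ∧ 0 < γ 1 0 ∧
        0 < (γ 0 0 : ℝ) * ξ + (γ 0 1 : ℝ) - y₁ ∧
        (γ 0 0 : ℝ) * ξ + (γ 0 1 : ℝ) - y₁ ≤ mnorm γ ^ (-μ) ∧
        0 < (γ 1 0 : ℝ) * ξ + (γ 1 1 : ℝ) - y₂ ∧
        (γ 1 0 : ℝ) * ξ + (γ 1 1 : ℝ) - y₂ ≤ mnorm γ ^ (-μ) := by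
  exact stmt17_general ξ hξ y₁ y₂ hy₁ hy₂ hy (1 + (2 - 6 * μ)) (by linarith)
    (not_infinite.2 (hωy _ (by linarith))) μ (by rw [lt_div_iff₀ (by linarith)]; nlinarith)
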